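/- Let A ∈ ℝ^{N×N}, C ∈ ℝ^{M×N}, L ∈ ℝ^{N×M}, A_h ∈ ℝ^{n×n}, B_h ∈ ℝ^{n×m}, C_h ∈ ℝ^{m×n}. Suppose that for every complex eigenvalue λ of A − L C, every complex eigenvalue of A_h + λ·(B_h C_h) has negative real part. Then every complex eigenvalue of the matrix (I_N ⊗ A_h + A ⊗ (B_h C_h)) − (L ⊗ B_h)(C ⊗ C_h) has negative real part. -/

import Mathlib

/-! Over `ℂ` put `F = A - L C` and `G = B_h C_h`. By the mixed-product rule the error matrix is
`K = 1 ⊗ A_h + F ⊗ G`, and it commutes with `F ⊗ 1`. Hence each `μ`-eigenspace of `K` is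
stable under `F ⊗ 1` and contains a common eigenvector `v`, with `(F ⊗ 1) v = l v`. On `v` we have
`F ⊗ G = (1 ⊗ G) (F ⊗ 1) = l (1 ⊗ G)`, so `(1 ⊗ (A_h + l G)) v = μ v`. Invertibility passes to
Kronecker products with `1`, so `l` is an eigenvalue of `F` and `μ` one of `A_h + l G`. -/

open Matrix Kronecker

/-- An eigenvalue of `K` has an eigenvector that is also an eigenvector of a given matrix `T`
commuting with `K`: restrict `T` to the eigenspace. -/
lemma exists_common_eigenvector {ι : Type*} [Fintype ι] [DecidableEq ι] {K T : Matrix ι ι ℂ}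
    (hKT : Commute K T) {μ : ℂ} (hμ : μ ∈ spectrum ℂ K) :
    ∃ (l : ℂ) (v : ι → ℂ), v ≠ 0 ∧ K *ᵥ v = μ • v ∧ T *ᵥ v = l • v := by
  rw [← Matrix.spectrum_toLin', ← Module.End.hasEigenvalue_iff_mem_spectrum] at hμ
  have hmaps : ∀ x ∈ Module.End.eigenspace (Matrix.toLin' K) μ,
      Matrix.toLin' T x ∈ Module.End.eigenspace (Matrix.toLin' K) μ := by
    intro x hx
    rw [Module.End.mem_eigenspace_iff, Matrix.toLin'_apply] at hx ⊢
    rw [Matrix.toLin'_apply, Matrix.mulVec_mulVec, hKT.eq, ← Matrix.mulVec_mulVec, hx,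
      Matrix.mulVec_smul]
  have : Nontrivial (Module.End.eigenspace (Matrix.toLin' K) μ) :=
    Submodule.nontrivial_iff_ne_bot.mpr hμ
  obtain ⟨l, hl⟩ := Module.End.exists_eigenvalue ((Matrix.toLin' T).restrict hmaps)
  obtain ⟨v, hv⟩ := hl.exists_hasEigenvector
  refine ⟨l, v, fun h0 => hv.2 (Subtype.ext h0), ?_, ?_⟩
  · simpa using Module.End.mem_eigenspace_iff.mp v.2
  · simpa using congrArg Subtype.val hv.apply_eq_smul

lemma mem_spectrum_of_mulVec {ι : Type*} [Fintype ι] [DecidableEq ι] {K : Matrix ι ι ℂ}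
    {μ : ℂ} {v : ι → ℂ} (hv : v ≠ 0) (h : K *ᵥ v = μ • v) : μ ∈ spectrum ℂ K := by
  rw [← Matrix.spectrum_toLin', ← Module.End.hasEigenvalue_iff_mem_spectrum]
  exact Module.End.hasEigenvalue_of_hasEigenvector
    ⟨Module.End.mem_eigenspace_iff.mpr (by simpa using h), hv⟩

lemma sub_kronecker_aux {R ι ι' κ κ' : Type*} [Ring R] (P Q : Matrix ι ι' R) (S : Matrix κ κ' R) :
    (P - Q) ⊗ₖ S = P ⊗ₖ S - Q ⊗ₖ S := by
  ext; simp [sub_mul]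

lemma kronecker_sub_aux {R ι ι' κ κ' : Type*} [Ring R] (S : Matrix ι ι' R) (P Q : Matrix κ κ' R) :
    S ⊗ₖ (P - Q) = S ⊗ₖ P - S ⊗ₖ Q := by
  ext; simp [mul_sub]

/-- If `l - F` is invertible then so is `(l - F) ⊗ 1 = l - F ⊗ 1`, as its determinant is a power of
`det (l - F)`. -/
lemma spectrum_kronecker_one_subset {ι κ : Type*} [Fintype ι] [DecidableEq ι] [Fintype κ]
    [DecidableEq κ] (F : Matrix ι ι ℂ) :
    spectrum ℂ (F ⊗ₖ (1 : Matrix κ κ ℂ)) ⊆ spectrum ℂ F := by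
  intro l hl hu
  apply hl
  have e : algebraMap ℂ (Matrix (ι × κ) (ι × κ) ℂ) l - F ⊗ₖ (1 : Matrix κ κ ℂ)
      = (algebraMap ℂ (Matrix ι ι ℂ) l - F) ⊗ₖ (1 : Matrix κ κ ℂ) := by
    rw [sub_kronecker_aux, Algebra.algebraMap_eq_smul_one, Algebra.algebraMap_eq_smul_one,
      Matrix.smul_kronecker, Matrix.one_kronecker_one]
  rw [spectrum.mem_resolventSet_iff] at hu ⊢
  rw [e, Matrix.isUnit_iff_isUnit_det, Matrix.det_kronecker]
  simpa using ((Matrix.isUnit_iff_isUnit_det _).mp hu).pow _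

lemma spectrum_one_kronecker_subset {ι κ : Type*} [Fintype ι] [DecidableEq ι] [Fintype κ]
    [DecidableEq κ] (H : Matrix κ κ ℂ) :
    spectrum ℂ ((1 : Matrix ι ι ℂ) ⊗ₖ H) ⊆ spectrum ℂ H := by
  intro l hl hu
  apply hl
  have e : algebraMap ℂ (Matrix (ι × κ) (ι × κ) ℂ) l - (1 : Matrix ι ι ℂ) ⊗ₖ H
      = (1 : Matrix ι ι ℂ) ⊗ₖ (algebraMap ℂ (Matrix κ κ ℂ) l - H) := by
    rw [kronecker_sub_aux, Algebra.algebraMap_eq_smul_one, Algebra.algebraMap_eq_smul_one,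
      Matrix.kronecker_smul, Matrix.one_kronecker_one]
  rw [spectrum.mem_resolventSet_iff] at hu ⊢
  rw [e, Matrix.isUnit_iff_isUnit_det, Matrix.det_kronecker]
  simpa using ((Matrix.isUnit_iff_isUnit_det _).mp hu).pow _

/-- Proposition 3: if every eigenvalue `λ` of `A − L C` is such that
`A_h + λ • (B_h C_h)` is Hurwitz, then the observer error dynamics matrix
`(I_N ⊗ A_h + A ⊗ (B_h C_h)) − (L ⊗ B_h)(C ⊗ C_h)` is Hurwitz. -/
theorem stmt_4 (N M n m : ℕ)
    (A : Matrix (Fin N) (Fin N) ℝ)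
    (C : Matrix (Fin M) (Fin N) ℝ)
    (L : Matrix (Fin N) (Fin M) ℝ)
    (Ah : Matrix (Fin n) (Fin n) ℝ)
    (Bh : Matrix (Fin n) (Fin m) ℝ)
    (Ch : Matrix (Fin m) (Fin n) ℝ)
    (h : ∀ l ∈ spectrum ℂ ((A - L * C).map Complex.ofReal),
        ∀ μ ∈ spectrum ℂ (Ah.map Complex.ofReal + l • (Bh * Ch).map Complex.ofReal),
          μ.re < 0) :
    ∀ μ ∈ spectrum ℂ
        ((((1 : Matrix (Fin N) (Fin N) ℝ) ⊗ₖ Ah + A ⊗ₖ (Bh * Ch))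
            - (L ⊗ₖ Bh) * (C ⊗ₖ Ch)).map Complex.ofReal),
      μ.re < 0 := by
  have hK : (((1 : Matrix (Fin N) (Fin N) ℝ) ⊗ₖ Ah + A ⊗ₖ (Bh * Ch))
            - (L ⊗ₖ Bh) * (C ⊗ₖ Ch)).map Complex.ofReal
      = (1 : Matrix (Fin N) (Fin N) ℂ) ⊗ₖ Ah.map Complex.ofReal
        + (A - L * C).map Complex.ofReal ⊗ₖ (Bh * Ch).map Complex.ofReal := by
    rw [← Matrix.mul_kronecker_mul, add_sub_assoc, ← sub_kronecker_aux]
    ext ⟨i, j⟩ ⟨i', j'⟩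
    by_cases hi : i = i' <;> simp [Matrix.kroneckerMap_apply, hi]
  intro μ hμ
  rw [hK] at hμ
  set F := (A - L * C).map Complex.ofReal
  set G := (Bh * Ch).map Complex.ofReal
  set H := Ah.map Complex.ofReal
  have hcomm : Commute ((1 : Matrix (Fin N) (Fin N) ℂ) ⊗ₖ H + F ⊗ₖ G)
      (F ⊗ₖ (1 : Matrix (Fin n) (Fin n) ℂ)) := by
    simp only [Commute, SemiconjBy, add_mul, mul_add, ← Matrix.mul_kronecker_mul, one_mul, mul_one]
  obtain ⟨l, v, hv, hKv, hFv⟩ := exists_common_eigenvector hcomm hμ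
  refine h l (spectrum_kronecker_one_subset F (mem_spectrum_of_mulVec hv hFv)) μ
    (spectrum_one_kronecker_subset (ι := Fin N) _ (mem_spectrum_of_mulVec hv ?_))
  have hFG : F ⊗ₖ G = ((1 : Matrix (Fin N) (Fin N) ℂ) ⊗ₖ G)
      * (F ⊗ₖ (1 : Matrix (Fin n) (Fin n) ℂ)) := by
    rw [← Matrix.mul_kronecker_mul, one_mul, mul_one]
  rw [← hKv, hFG, Matrix.kronecker_add, Matrix.add_mulVec, Matrix.add_mulVec,
    ← Matrix.mulVec_mulVec, hFv, Matrix.kronecker_smul, Matrix.smul_mulVec, Matrix.mulVec_smul]
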